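/- Assume m₁+m₂ > 1. There exist a constant C > 0 and a natural number N such that for every λ ∈ ℂ with Im λ > 0 and every t ∈ (0, 1/2], |b_λ(t)| ≤ C (1+|λ|)^N t^{−(m₁+m₂−1)}. -/

import Mathlib

open Complex MeasureTheory Set

noncomputable section

/-- Gauss hypergeometric function ₂F₁ as a power series sum. -/
def hyp (a b c x : ℂ) : ℂ :=
  ∑' n : ℕ, (ascPochhammer ℂ n).eval a * (ascPochhammer ℂ n).eval b /
    ((ascPochhammer ℂ n).eval c * (n.factorial : ℂ)) * x ^ n

/-- ρ = (m₁ + 2 m₂)/2 -/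
def rho (m₁ m₂ : ℕ) : ℝ := ((m₁ : ℝ) + 2 * m₂) / 2

/-- Δ(t) = (2 sinh t)^(m₁+m₂) (2 cosh t)^(m₂) -/
def Del (m₁ m₂ : ℕ) (t : ℝ) : ℝ :=
  (2 * Real.sinh t) ^ (m₁ + m₂) * (2 * Real.cosh t) ^ m₂

/-- The solution Φ_λ. -/
def Phi (m₁ m₂ : ℕ) (l : ℂ) (t : ℝ) : ℂ :=
  ((2 * Real.cosh t : ℝ) : ℂ) ^ (Complex.I * l - (rho m₁ m₂ : ℂ)) *
    hyp (((rho m₁ m₂ : ℂ) - Complex.I * l) / 2) (((m₁ : ℂ) + 2) / 4 - Complex.I * l / 2)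
      (1 - Complex.I * l) ((((Real.cosh t) ^ 2 : ℝ) : ℂ))⁻¹

/-- The function b_λ. -/
def bfun (m₁ m₂ : ℕ) (l : ℂ) (t : ℝ) : ℂ :=
  (2 : ℂ) ^ (-(rho m₁ m₂ : ℂ) - 1 - Complex.I * l) *
    (Complex.Gamma (((rho m₁ m₂ : ℂ) - Complex.I * l) / 2) *
      Complex.Gamma (((m₁ : ℂ) + 2) / 4 - Complex.I * l / 2) /
      (Complex.Gamma (((m₁ : ℂ) + (m₂ : ℂ) + 1) / 2) * Complex.Gamma (1 - Complex.I * l))) *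
    Phi m₁ m₂ l t

/-!
Let `𝐅(a, b; c; x) = ₂F₁(a, b; c; x) / Γ(c)` and `z = -iλ/2`, so that `Re z ≥ 0`. Up to factors
bounded by a constant, `b_λ(t)` is `Γ(a) Γ(b) 𝐅(a, b; c; x)` with `a = α + z`, `b = β + z`,
`c = γ + 2z` and `1 - x = tanh² t`. In Euler's formula
`Γ(b) Γ(c - b) 𝐅(a, b; c; x) = ∫₀¹ u ^ (b - 1) (1 - u) ^ (c - b - 1) (1 - x u) ^ (-a) du`
the integrand is dominated by the one belonging to `κ + q, κ; κ + q`, where `q = Re (c - b)`, as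
soon as `κ ≤ Re b` and `Re (a + b - c) ≤ κ`; the latter integral is a multiple of `(1 - x) ^ (-κ)`
because `₂F₁(c, b; c; x) = (1 - x) ^ (-b)`. What is left is `Γ(α + z) / Γ(γ - β + z)`, which grows
at most polynomially. Euler's formula needs `β < γ`; the general case is reduced to this one by
`𝐅(a, b; c) = c 𝐅(a, b; c + 1) + a b x 𝐅(a + 1, b + 1; c + 2)`,
which increases `γ - α` and `γ - β` by one and preserves `α + β ≤ γ + κ`.
-/

theorem ne_neg_natCast_of_re_pos {z : ℂ} (hz : 0 < z.re) (k : ℕ) : z ≠ -k := fun h => by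
  have hre := congrArg re h
  rw [neg_re, natCast_re] at hre
  linarith [k.cast_nonneg (α := ℝ)]

theorem hasSum_regularizedGaussHGFun (a b c : ℂ) {x : ℂ} (hx : ‖x‖ < 1) :
    HasSum (fun n : ℕ => (regularizedGaussHGFunSeries a b c).coeff n * x ^ n)
      (regularizedGaussHGFun a b c x) := by
  have hx' : x ∈ Metric.eball 0 (regularizedGaussHGFunSeries a b c).radius :=
    Metric.eball_subset_eball (radius_regularizedGaussHGFunSeries_ge_one a b c)
      (by simpa [← ofReal_norm] using hx)
  simpa only [FormalMultilinearSeries.apply_eq_pow_smul_coeff, smul_eq_mul, mul_comm,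
    regularizedGaussHGFun] using (regularizedGaussHGFunSeries a b c).hasSum hx'

theorem coeff_zero_regularizedGaussHGFunSeries (a b c : ℂ) :
    (regularizedGaussHGFunSeries a b c).coeff 0 = (Gamma c)⁻¹ := by
  simp [coeff_regularizedGaussHGFunSeries]

theorem coeff_succ_regularizedGaussHGFunSeries (a b c : ℂ) (n : ℕ) :
    (regularizedGaussHGFunSeries a b c).coeff (n + 1) =
      c * (regularizedGaussHGFunSeries a b (c + 1)).coeff (n + 1) +
        a * b * (regularizedGaussHGFunSeries (a + 1) (b + 1) (c + 2)).coeff n := by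
  have hΓ := one_div_Gamma_eq_self_mul_one_div_Gamma_add_one (c + (n + 1))
  have h₁ : c + 1 + (n + 1) = c + (n + 1) + 1 := by ring
  have h₂ : c + 2 + n = c + (n + 1) + 1 := by ring
  have hfac : (n.factorial : ℂ) ≠ 0 := mod_cast n.factorial_ne_zero
  have hn : (n : ℂ) + 1 ≠ 0 := mod_cast n.succ_ne_zero
  simp only [coeff_regularizedGaussHGFunSeries, ascPochhammer_succ_left, Polynomial.eval_mul,
    Polynomial.eval_X, Polynomial.eval_comp, Polynomial.eval_add, Polynomial.eval_one,
    Nat.factorial_succ, Nat.cast_mul, Nat.cast_add, Nat.cast_one, h₁, h₂, div_eq_mul_inv, mul_inv,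
    hΓ]
  field_simp

theorem regularizedGaussHGFun_contiguous (a b c : ℂ) {x : ℂ} (hx : ‖x‖ < 1) :
    regularizedGaussHGFun a b c x = c * regularizedGaussHGFun a b (c + 1) x +
      a * b * x * regularizedGaussHGFun (a + 1) (b + 1) (c + 2) x := by
  have h₀ := (hasSum_nat_add_iff' 1).2 (hasSum_regularizedGaussHGFun a b c hx)
  have h₁ := (hasSum_nat_add_iff' 1).2 ((hasSum_regularizedGaussHGFun a b (c + 1) hx).mul_left c)
  have h₂ := (hasSum_regularizedGaussHGFun (a + 1) (b + 1) (c + 2) hx).mul_left (a * b * x)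
  have hterm (n : ℕ) : (regularizedGaussHGFunSeries a b c).coeff (n + 1) * x ^ (n + 1) =
      c * ((regularizedGaussHGFunSeries a b (c + 1)).coeff (n + 1) * x ^ (n + 1)) +
        a * b * x * ((regularizedGaussHGFunSeries (a + 1) (b + 1) (c + 2)).coeff n * x ^ n) := by
    rw [coeff_succ_regularizedGaussHGFunSeries]
    ring
  rw [funext hterm] at h₀
  have hsum := h₀.unique (h₁.add h₂)
  simp only [Finset.sum_range_one, pow_zero, mul_one, coeff_zero_regularizedGaussHGFunSeries,
    one_div_Gamma_eq_self_mul_one_div_Gamma_add_one c] at hsum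
  linear_combination hsum

theorem hasSum_one_sub_cpow_neg (a : ℂ) {x : ℂ} (hx : ‖x‖ < 1) :
    HasSum (fun n : ℕ => (ascPochhammer ℂ n).eval a / n.factorial * x ^ n) ((1 - x) ^ (-a)) := by
  have hx' : x ∈ Metric.eball 0 1 := by simpa [← ofReal_norm] using hx
  have hchoose (n : ℕ) : Ring.choose (a + n - 1) n = (ascPochhammer ℂ n).eval a / n.factorial := by
    rw [eq_div_iff (mod_cast n.factorial_ne_zero), Ring.choose, mul_comm, ← nsmul_eq_mul,
      Ring.factorial_nsmul_multichoose_eq_ascPochhammer, Polynomial.ascPochhammer_smeval_eq_eval]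
    congr 1
    ring
  simpa only [FormalMultilinearSeries.ofScalars_apply_eq, hchoose, smul_eq_mul, zero_add,
    one_div, ← cpow_neg] using (one_div_one_sub_cpow_hasFPowerSeriesOnBall_zero a).hasSum hx'

theorem regularizedGaussHGFun_self_left (b : ℂ) {c : ℂ} (hc : ∀ k : ℕ, c ≠ -k) {x : ℂ}
    (hx : ‖x‖ < 1) :
    regularizedGaussHGFun c b c x = (1 - x) ^ (-b) / Gamma c := by
  have hcoeff (n : ℕ) : (regularizedGaussHGFunSeries c b c).coeff n =
      (ascPochhammer ℂ n).eval b / n.factorial / Gamma c := by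
    have hcn : Gamma (c + n) ≠ 0 :=
      Gamma_ne_zero fun m h => hc (m + n) (by push_cast; linear_combination h)
    rw [coeff_regularizedGaussHGFunSeries, ← Gamma_add_nat_div_Gamma_eq c hc]
    field_simp
  have h := (hasSum_one_sub_cpow_neg b hx).div_const (Gamma c)
  refine (hasSum_regularizedGaussHGFun c b c hx).unique ?_
  simpa only [hcoeff, mul_div_right_comm] using h

theorem hyp_eq_Gamma_mul_regularizedGaussHGFun (a b : ℂ) {c : ℂ} (hc : ∀ k : ℕ, c ≠ -k) (x : ℂ) :
    hyp a b c x = Gamma c * regularizedGaussHGFun a b c x := by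
  rw [← ordinaryHypergeometric_div_Gamma_eq hc, mul_div_cancel₀ _ (Gamma_ne_zero hc), hyp,
    ordinaryHypergeometric_eq_tsum]
  congr! 2 with n
  rw [smul_eq_mul]
  ring

/-- The integrand of Euler's integral representation of `₂F₁(a, b; c; x)`. -/
def eulerIntegrand (a b c x : ℂ) (u : ℝ) : ℂ :=
  (u : ℂ) ^ (b - 1) * (1 - (u : ℂ)) ^ (c - b - 1) * (1 - x * u) ^ (-a)

theorem norm_mul_ofReal_lt_one {x : ℂ} (hx : ‖x‖ < 1) {u : ℝ} (hu : u ∈ Icc (0 : ℝ) 1) :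
    ‖x * u‖ < 1 := by
  rw [norm_mul, Complex.norm_of_nonneg hu.1]
  exact (mul_le_of_le_one_right (norm_nonneg x) hu.2).trans_lt hx

theorem intervalIntegrable_eulerIntegrand (a : ℂ) {b c x : ℂ} (hb : 0 < b.re) (hbc : b.re < c.re)
    (hx : ‖x‖ < 1) : IntervalIntegrable (eulerIntegrand a b c x) volume 0 1 := by
  refine (betaIntegral_convergent hb (by simpa using hbc)).mul_continuousOn ?_
  refine ContinuousOn.cpow_const (by fun_prop) fun u hu => ?_
  rw [uIcc_of_le zero_le_one] at hu
  rw [sub_eq_add_neg]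
  exact mem_slitPlane_of_norm_lt_one (by simpa using norm_mul_ofReal_lt_one hx hu)

theorem integral_cpow_mul_one_sub_cpow_mul_pow {b c : ℂ} (hb : 0 < b.re) (hbc : b.re < c.re)
    (n : ℕ) :
    ∫ u in (0 : ℝ)..1, (u : ℂ) ^ (b - 1) * (1 - (u : ℂ)) ^ (c - b - 1) * u ^ n =
      Gamma (b + n) * Gamma (c - b) / Gamma (c + n) := by
  have hbn : 0 < (b + n).re := by simp only [add_re, natCast_re]; positivity
  have hsum : b + n + (c - b) = c + n := by ring
  rw [← hsum, ← betaIntegral_eq_Gamma_mul_div _ _ hbn (by simpa using hbc), betaIntegral]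
  refine intervalIntegral.integral_congr_Ioo_of_le zero_le_one fun u hu => ?_
  have hpow : (u : ℂ) ^ (b + n - 1) = (u : ℂ) ^ (b - 1) * (u : ℂ) ^ n := by
    rw [← cpow_natCast, ← cpow_add _ _ (mod_cast hu.1.ne')]
    congr 1
    ring
  simp only [hpow]
  ring

theorem hasSum_integral_eulerIntegrand (a : ℂ) {b c x : ℂ} (hb : 0 < b.re) (hbc : b.re < c.re)
    (hx : ‖x‖ < 1) :
    HasSum (fun n : ℕ => (ascPochhammer ℂ n).eval a / n.factorial * x ^ n *
        (Gamma (b + n) * Gamma (c - b) / Gamma (c + n)))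
      (∫ u in (0 : ℝ)..1, eulerIntegrand a b c x u) := by
  set w : ℝ → ℂ := fun u => (u : ℂ) ^ (b - 1) * (1 - (u : ℂ)) ^ (c - b - 1)
  set k : ℕ → ℂ := fun n => (ascPochhammer ℂ n).eval a / n.factorial
  have hw : IntervalIntegrable w volume 0 1 := betaIntegral_convergent hb (by simpa using hbc)
  have hI : uIoc (0 : ℝ) 1 ⊆ Icc 0 1 := (uIoc_of_le zero_le_one).trans_subset Ioc_subset_Icc_self
  have hterm (n : ℕ) : k n * x ^ n * (Gamma (b + n) * Gamma (c - b) / Gamma (c + n)) =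
      ∫ u in (0 : ℝ)..1, w u * (k n * (x * u) ^ n) := by
    rw [← integral_cpow_mul_one_sub_cpow_mul_pow hb hbc, ← intervalIntegral.integral_const_mul]
    congr! 2
    ring
  refine HasSum.congr_fun (f := fun n => ∫ u in (0 : ℝ)..1, w u * (k n * (x * u) ^ n)) ?_ hterm
  refine intervalIntegral.hasSum_integral_of_dominated_convergence
    (fun n u => ‖w u‖ * ‖k n * x ^ n‖)
    (fun n => hw.def'.aestronglyMeasurable.mul (Continuous.aestronglyMeasurable (by fun_prop)))
    (fun n => .of_forall fun u hu => ?_)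
    (.of_forall fun u _ => (hasSum_one_sub_cpow_neg a hx).summable.norm.mul_left _)
    ?_
    (.of_forall fun u hu =>
      (hasSum_one_sub_cpow_neg a (norm_mul_ofReal_lt_one hx (hI hu))).mul_left _)
  · have hxu : ‖x * u‖ ≤ ‖x‖ := by
      rw [norm_mul, Complex.norm_of_nonneg (hI hu).1]
      exact mul_le_of_le_one_right (norm_nonneg x) (hI hu).2
    simp only [norm_mul (w u), norm_mul (k n), norm_pow]
    gcongr
  · simp only [tsum_mul_left]
    exact hw.norm.mul_const _

theorem Gamma_mul_Gamma_mul_regularizedGaussHGFun (a : ℂ) {b c x : ℂ} (hb : 0 < b.re)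
    (hbc : b.re < c.re) (hx : ‖x‖ < 1) :
    Gamma b * Gamma (c - b) * regularizedGaussHGFun a b c x =
      ∫ u in (0 : ℝ)..1, eulerIntegrand a b c x u := by
  refine ((hasSum_regularizedGaussHGFun a b c hx).mul_left _).unique
    ((hasSum_integral_eulerIntegrand a hb hbc hx).congr_fun fun n => ?_)
  have hΓ := Gamma_add_nat_div_Gamma_eq (n := n) b (ne_neg_natCast_of_re_pos hb)
  have := Gamma_ne_zero_of_re_pos hb
  have hfac : (n.factorial : ℂ) ≠ 0 := mod_cast n.factorial_ne_zero
  rw [coeff_regularizedGaussHGFunSeries, ← hΓ]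
  field_simp

theorem norm_ofReal_lt_one {x : ℝ} (hx : x ∈ Ico (0 : ℝ) 1) : ‖(x : ℂ)‖ < 1 := by
  rw [Complex.norm_of_nonneg hx.1]
  exact hx.2

theorem one_sub_mul_pos {x u : ℝ} (hx : x < 1) (hu : u ∈ Ioo (0 : ℝ) 1) : 0 < 1 - x * u := by
  nlinarith [hu.1, hu.2]

theorem norm_eulerIntegrand (a b c : ℂ) {x u : ℝ} (hx : x < 1) (hu : u ∈ Ioo (0 : ℝ) 1) :
    ‖eulerIntegrand a b c x u‖ =
      u ^ (b.re - 1) * (1 - u) ^ (c.re - b.re - 1) * (1 - x * u) ^ (-a.re) := by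
  have hxu := one_sub_mul_pos hx hu
  have h₁ : 1 - (u : ℂ) = (1 - u : ℝ) := by push_cast; rfl
  have h₂ : 1 - (x : ℂ) * u = (1 - x * u : ℝ) := by push_cast; rfl
  rw [eulerIntegrand, norm_mul, norm_mul, h₁, h₂, norm_cpow_eq_rpow_re_of_pos hu.1,
    norm_cpow_eq_rpow_re_of_pos (sub_pos.2 hu.2), norm_cpow_eq_rpow_re_of_pos hxu]
  simp only [sub_re, neg_re, one_re]

theorem ofReal_norm_eulerIntegrand (a b c : ℝ) {x u : ℝ} (hx : x < 1) (hu : u ∈ Ioo (0 : ℝ) 1) :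
    (‖eulerIntegrand a b c x u‖ : ℂ) = eulerIntegrand a b c x u := by
  have hxu := one_sub_mul_pos hx hu
  rw [norm_eulerIntegrand _ _ _ hx hu, eulerIntegrand]
  push_cast [ofReal_cpow hu.1.le, ofReal_cpow (sub_pos.2 hu.2).le, ofReal_cpow hxu.le, ofReal_re]
  rfl

theorem integral_norm_eulerIntegrand_self {p q x : ℝ} (hp : 0 < p) (hq : 0 < q)
    (hx : x ∈ Ico (0 : ℝ) 1) :
    ∫ u in (0 : ℝ)..1, ‖eulerIntegrand (p + q : ℝ) p (p + q : ℝ) x u‖ =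
      Real.Gamma p * Real.Gamma q / Real.Gamma (p + q) * (1 - x) ^ (-p) := by
  have hbase : (1 - x : ℂ) ^ (-p : ℂ) = ((1 - x) ^ (-p) : ℝ) := by
    rw [ofReal_cpow (sub_nonneg.2 hx.2.le)]
    push_cast
    rfl
  apply ofReal_injective
  rw [← intervalIntegral.integral_ofReal, intervalIntegral.integral_congr_Ioo_of_le zero_le_one
    fun u hu => ofReal_norm_eulerIntegrand (p + q) p (p + q) hx.2 hu,
    ← Gamma_mul_Gamma_mul_regularizedGaussHGFun _ (by simpa) (by simpa) (norm_ofReal_lt_one hx),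
    regularizedGaussHGFun_self_left _ (ne_neg_natCast_of_re_pos (add_pos hp hq))
      (norm_ofReal_lt_one hx), hbase]
  push_cast [← Gamma_ofReal]
  rw [add_sub_cancel_left]
  ring

theorem norm_integral_eulerIntegrand_le {a b c : ℂ} {κ x : ℝ} (hκ : 0 < κ) (hb : κ ≤ b.re)
    (hbc : b.re < c.re) (hab : a.re + b.re ≤ c.re + κ) (hx : x ∈ Ico (0 : ℝ) 1) :
    ‖∫ u in (0 : ℝ)..1, eulerIntegrand a b c x u‖ ≤
      Real.Gamma κ * Real.Gamma (c.re - b.re) / Real.Gamma (κ + (c.re - b.re)) *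
        (1 - x) ^ (-κ) := by
  have hq : 0 < c.re - b.re := sub_pos.2 hbc
  rw [← integral_norm_eulerIntegrand_self hκ hq hx]
  refine (intervalIntegral.norm_integral_le_integral_norm zero_le_one).trans
    (intervalIntegral.integral_mono_on_of_le_Ioo zero_le_one
      (intervalIntegrable_eulerIntegrand _ (hκ.trans_le hb) hbc (norm_ofReal_lt_one hx)).norm
      (intervalIntegrable_eulerIntegrand _ (by simpa) (by simpa) (norm_ofReal_lt_one hx)).norm
      fun u hu => ?_)
  have hxu := one_sub_mul_pos hx.2 hu
  have hu' : 0 < 1 - u := sub_pos.2 hu.2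
  rw [norm_eulerIntegrand _ _ _ hx.2 hu, norm_eulerIntegrand _ _ _ hx.2 hu]
  simp only [ofReal_re, add_sub_cancel_left]
  have h₁ : u ^ (b.re - 1) ≤ u ^ (κ - 1) :=
    Real.rpow_le_rpow_of_exponent_ge hu.1 hu.2.le (by linarith)
  have h₂ : (1 - x * u) ^ (-a.re) ≤ (1 - x * u) ^ (-(κ + (c.re - b.re))) :=
    Real.rpow_le_rpow_of_exponent_ge hxu (by nlinarith [hu.1, hx.1]) (by linarith)
  have := hu.1
  gcongr

theorem norm_Gamma_mul_Gamma_add_le {s : ℂ} {σ δ : ℝ} (hσ : 0 < σ) (hs : σ ≤ s.re) (hδ : 0 < δ) :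
    ‖Gamma s‖ * Real.Gamma (σ + δ) ≤ Real.Gamma σ * ‖Gamma (s + δ)‖ := by
  have hs' : 0 < s.re := hσ.trans_le hs
  have hbc : s.re < (s + δ).re := by simpa
  have hbeta : ∫ u in (0 : ℝ)..1, eulerIntegrand 0 s (s + δ) (0 : ℝ) u =
      Gamma s * Gamma δ / Gamma (s + δ) := by
    simp [eulerIntegrand, ← betaIntegral_eq_Gamma_mul_div s δ hs' (by simpa), betaIntegral]
  have h := norm_integral_eulerIntegrand_le (a := 0) hσ hs hbc (by simp; linarith)
    (left_mem_Ico.2 zero_lt_one)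
  have hΓsδ : 0 < ‖Gamma (s + δ)‖ := norm_pos_iff.2 (Gamma_ne_zero_of_re_pos (hs'.trans hbc))
  have hΓδ : 0 < Real.Gamma δ := Real.Gamma_pos_of_pos hδ
  have hΓσδ : 0 < Real.Gamma (σ + δ) := Real.Gamma_pos_of_pos (by positivity)
  rw [hbeta, norm_div, norm_mul, Gamma_ofReal, Complex.norm_of_nonneg hΓδ.le, add_re, ofReal_re,
    add_sub_cancel_left, sub_zero, Real.one_rpow, mul_one, div_le_div_iff₀ hΓsδ hΓσδ] at h
  exact le_of_mul_le_mul_right (by linarith) hΓδ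

theorem Gamma_div_Gamma_add_le {p q δ : ℝ} (hp : 0 < p) (hpq : p ≤ q) (hδ : 0 < δ) :
    Real.Gamma q / Real.Gamma (δ + q) ≤ Real.Gamma p / Real.Gamma (δ + p) := by
  have hq : 0 < q := hp.trans_le hpq
  have h := norm_Gamma_mul_Gamma_add_le (s := q) hp hpq hδ
  rw [← ofReal_add, Gamma_ofReal, Gamma_ofReal,
    Complex.norm_of_nonneg (Real.Gamma_pos_of_pos hq).le,
    Complex.norm_of_nonneg (Real.Gamma_pos_of_pos (by positivity)).le] at h
  rw [add_comm δ, add_comm δ]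
  exact (div_le_div_iff₀ (Real.Gamma_pos_of_pos (by positivity))
    (Real.Gamma_pos_of_pos (by positivity))).2 h

theorem norm_Gamma_mul_Gamma_mul_regularizedGaussHGFun_le {a b c : ℂ} {κ p x : ℝ} (hκ : 0 < κ)
    (hb : κ ≤ b.re) (hp : 0 < p) (hbc : p ≤ c.re - b.re) (hab : a.re + b.re ≤ c.re + κ)
    (hx : x ∈ Ico (0 : ℝ) 1) :
    ‖Gamma b * Gamma (c - b) * regularizedGaussHGFun a b c x‖ ≤
      Real.Gamma κ * (Real.Gamma p / Real.Gamma (κ + p)) * (1 - x) ^ (-κ) := by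
  have hlt : b.re < c.re := by linarith
  have hx₁ : 0 < 1 - x := sub_pos.2 hx.2
  rw [Gamma_mul_Gamma_mul_regularizedGaussHGFun a (hκ.trans_le hb) hlt (norm_ofReal_lt_one hx)]
  refine (norm_integral_eulerIntegrand_le hκ hb hlt hab hx).trans ?_
  rw [mul_div_assoc]
  gcongr _ * ?_ * _
  exact Gamma_div_Gamma_add_le hp hbc hκ

theorem norm_add_mul_le (w k z : ℂ) : ‖w + k * z‖ ≤ (‖w‖ + ‖k‖) * (1 + ‖z‖) := by
  have hle := norm_add_le w (k * z)
  rw [norm_mul] at hle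
  nlinarith [norm_nonneg w, norm_nonneg k, norm_nonneg z]

theorem norm_Gamma_add_nat_le {s : ℂ} (hs : 0 < s.re) (n : ℕ) :
    ‖Gamma (s + n)‖ ≤ (‖s‖ + n) ^ n * ‖Gamma s‖ := by
  induction n with
  | zero => simp
  | succ n ih =>
    have hsn : s + n ≠ 0 := fun h => ne_neg_natCast_of_re_pos hs n (eq_neg_of_add_eq_zero_left h)
    calc ‖Gamma (s + (n + 1 : ℕ))‖ = ‖s + n‖ * ‖Gamma (s + n)‖ := by
          rw [Nat.cast_succ, ← add_assoc, Gamma_add_one _ hsn, norm_mul]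
      _ ≤ (‖s‖ + n) * ((‖s‖ + n) ^ n * ‖Gamma s‖) := by
          gcongr
          exact (norm_add_le _ _).trans_eq (by rw [norm_natCast])
      _ = (‖s‖ + n) ^ (n + 1) * ‖Gamma s‖ := by ring
      _ ≤ (‖s‖ + (n + 1 : ℕ)) ^ (n + 1) * ‖Gamma s‖ := by
          gcongr
          exact n.le_succ

theorem exists_norm_Gamma_add_le {α β : ℝ} (hα : 0 < α) (hβ : 0 < β) :
    ∃ (K : ℝ) (N : ℕ), 0 ≤ K ∧ ∀ z : ℂ, 0 ≤ z.re →
      ‖Gamma (α + z)‖ ≤ K * (1 + ‖z‖) ^ N * ‖Gamma (β + z)‖ := by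
  obtain ⟨N, hN⟩ := exists_nat_gt (α - β)
  have hδ : 0 < β + N - α := by linarith
  have hβN : 0 < Real.Gamma (β + N) := Real.Gamma_pos_of_pos (by positivity)
  refine ⟨Real.Gamma α / Real.Gamma (β + N) * (β + N + 1) ^ N, N, by positivity, fun z hz => ?_⟩
  have hshift : α + z + (β + N - α : ℝ) = β + z + N := by push_cast; ring
  have hup := norm_Gamma_mul_Gamma_add_le (s := α + z) hα (by simpa) hδ
  rw [add_sub_cancel, hshift, ← le_div_iff₀ hβN] at hup
  have hbase : ‖β + z‖ + N ≤ (β + N + 1) * (1 + ‖z‖) := by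
    have hle := norm_add_mul_le β 1 z
    rw [one_mul, norm_one, Complex.norm_of_nonneg hβ.le] at hle
    nlinarith [norm_nonneg z, N.cast_nonneg (α := ℝ)]
  have hdown : ‖Gamma (β + z + N)‖ ≤ ((β + N + 1) * (1 + ‖z‖)) ^ N * ‖Gamma (β + z)‖ :=
    (norm_Gamma_add_nat_le (by rw [add_re, ofReal_re]; positivity) N).trans (by gcongr)
  calc ‖Gamma (α + z)‖ ≤ Real.Gamma α * ‖Gamma (β + z + N)‖ / Real.Gamma (β + N) := hup
    _ ≤ Real.Gamma α * (((β + N + 1) * (1 + ‖z‖)) ^ N * ‖Gamma (β + z)‖) /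
        Real.Gamma (β + N) := by gcongr
    _ = _ := by rw [mul_pow]; ring

/-- The functions `Γ(α + z) Γ(β + z) / Γ(γ + 2 z) · ₂F₁(α + z, β + z; γ + 2 z; x)` are
`O((1 - x) ^ (-κ))` on `[0, 1)`, with a constant growing at most polynomially in `z` on the closed
right half-plane. The quotient by `Γ(γ + 2 z)` is part of `regularizedGaussHGFun`. -/
def HasPolyGaussBound (κ α β γ : ℝ) : Prop :=
  ∃ (K : ℝ) (N : ℕ), 0 ≤ K ∧ ∀ z : ℂ, 0 ≤ z.re → ∀ x ∈ Ico (0 : ℝ) 1,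
    ‖Gamma (α + z) * Gamma (β + z) * regularizedGaussHGFun (α + z) (β + z) (γ + 2 * z) x‖ ≤
      K * (1 + ‖z‖) ^ N * (1 - x) ^ (-κ)

theorem HasPolyGaussBound.mono {κ κ' α β γ : ℝ} (h : HasPolyGaussBound κ α β γ) (hκ : κ ≤ κ') :
    HasPolyGaussBound κ' α β γ := by
  obtain ⟨K, N, hK, h⟩ := h
  refine ⟨K, N, hK, fun z hz x hx => (h z hz x hx).trans ?_⟩
  gcongr ?_ * ?_
  exact Real.rpow_le_rpow_of_exponent_ge (sub_pos.2 hx.2) (by linarith [hx.1]) (by linarith)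

theorem hasPolyGaussBound_of_lt {κ α β γ : ℝ} (hκ : 0 < κ) (hα : 0 < α) (hκβ : κ ≤ β)
    (hβγ : β < γ) (hαβ : α + β ≤ γ + κ) : HasPolyGaussBound κ α β γ := by
  have hp : 0 < γ - β := sub_pos.2 hβγ
  obtain ⟨K, N, hK, hΓ⟩ := exists_norm_Gamma_add_le hα hp
  refine ⟨K * (Real.Gamma κ * (Real.Gamma (γ - β) / Real.Gamma (κ + (γ - β)))), N, by positivity,
    fun z hz x hx => ?_⟩
  have hsub : (γ + 2 * z) - (β + z) = (γ - β : ℝ) + z := by push_cast; ring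
  have hre : (γ + 2 * z).re - (β + z).re = γ - β + z.re := by simp; ring
  have hF := norm_Gamma_mul_Gamma_mul_regularizedGaussHGFun_le (a := α + z) (b := β + z)
    (c := γ + 2 * z) hκ (by simp; linarith) hp (by linarith) (by simp; linarith) hx
  rw [hsub] at hF
  set F := regularizedGaussHGFun (α + z) (β + z) (γ + 2 * z) x
  calc ‖Gamma (α + z) * Gamma (β + z) * F‖ = ‖Gamma (α + z)‖ * ‖Gamma (β + z) * F‖ := by
        rw [mul_assoc, norm_mul]
    _ ≤ K * (1 + ‖z‖) ^ N * ‖Gamma ((γ - β : ℝ) + z)‖ * ‖Gamma (β + z) * F‖ := by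
        gcongr
        exact hΓ z hz
    _ = K * (1 + ‖z‖) ^ N * ‖Gamma (β + z) * Gamma ((γ - β : ℝ) + z) * F‖ := by
        simp only [norm_mul]
        ring
    _ ≤ K * (1 + ‖z‖) ^ N * (Real.Gamma κ * (Real.Gamma (γ - β) / Real.Gamma (κ + (γ - β))) *
        (1 - x) ^ (-κ)) := by gcongr
    _ = _ := by ring

theorem Gamma_mul_Gamma_mul_regularizedGaussHGFun_contiguous {a b : ℂ} (ha : a ≠ 0) (hb : b ≠ 0)
    (c : ℂ) {x : ℂ} (hx : ‖x‖ < 1) :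
    Gamma a * Gamma b * regularizedGaussHGFun a b c x =
      c * (Gamma a * Gamma b * regularizedGaussHGFun a b (c + 1) x) +
        x * (Gamma (a + 1) * Gamma (b + 1) *
          regularizedGaussHGFun (a + 1) (b + 1) (c + 2) x) := by
  rw [regularizedGaussHGFun_contiguous a b c hx, Gamma_add_one a ha, Gamma_add_one b hb]
  ring

theorem HasPolyGaussBound.of_contiguous {κ α β γ : ℝ} (hα : 0 < α) (hβ : 0 < β)
    (h₁ : HasPolyGaussBound κ α β (γ + 1)) (h₂ : HasPolyGaussBound κ (α + 1) (β + 1) (γ + 2)) :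
    HasPolyGaussBound κ α β γ := by
  obtain ⟨K₁, N₁, hK₁, h₁⟩ := h₁
  obtain ⟨K₂, N₂, hK₂, h₂⟩ := h₂
  set A := ‖(γ : ℂ)‖ + ‖(2 : ℂ)‖
  refine ⟨A * K₁ + K₂, N₁ + 1 + N₂, by positivity, fun z hz x hx => ?_⟩
  have hα' : (α + z : ℂ) ≠ 0 := ne_of_apply_ne re (by simp; linarith)
  have hβ' : (β + z : ℂ) ≠ 0 := ne_of_apply_ne re (by simp; linarith)
  have h₁z := h₁ z hz x hx
  have h₂z := h₂ z hz x hx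
  push_cast at h₁z h₂z
  rw [add_right_comm _ 1 (2 * z)] at h₁z
  rw [add_right_comm _ 1 z, add_right_comm _ 1 z, add_right_comm _ 2 (2 * z)] at h₂z
  have hz₁ : 1 ≤ 1 + ‖z‖ := le_add_of_nonneg_right (norm_nonneg z)
  have hx₁ : 0 < 1 - x := sub_pos.2 hx.2
  rw [Gamma_mul_Gamma_mul_regularizedGaussHGFun_contiguous hα' hβ' _ (norm_ofReal_lt_one hx)]
  refine (norm_add_le _ _).trans ?_
  rw [norm_mul, norm_mul (x : ℂ)]
  calc _ ≤ A * (1 + ‖z‖) * (K₁ * (1 + ‖z‖) ^ N₁ * (1 - x) ^ (-κ)) +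
        1 * (K₂ * (1 + ‖z‖) ^ N₂ * (1 - x) ^ (-κ)) := by
        gcongr
        exacts [norm_add_mul_le γ 2 z, (norm_ofReal_lt_one hx).le]
    _ = (A * K₁ * (1 + ‖z‖) ^ (N₁ + 1) + K₂ * (1 + ‖z‖) ^ N₂) * (1 - x) ^ (-κ) := by ring
    _ ≤ (A * K₁ * (1 + ‖z‖) ^ (N₁ + 1 + N₂) + K₂ * (1 + ‖z‖) ^ (N₁ + 1 + N₂)) *
        (1 - x) ^ (-κ) := by
        gcongr (_ * ?_ + _ * ?_) * _
        · exact pow_le_pow_right₀ hz₁ (Nat.le_add_right _ _)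
        · exact pow_le_pow_right₀ hz₁ (Nat.le_add_left _ _)
    _ = _ := by ring

theorem hasPolyGaussBound {κ α β γ : ℝ} (hκ : 0 < κ) (hα : 0 < α) (hβ : 0 < β)
    (hαβ : α + β ≤ γ + κ) : HasPolyGaussBound κ α β γ := by
  obtain ⟨r, hr⟩ := exists_nat_gt (max α β - γ)
  induction r generalizing α β γ with
  | zero =>
    have hαγ : α < γ := by linarith [le_max_left α β, hr.trans_eq Nat.cast_zero]
    have hβγ : β < γ := by linarith [le_max_right α β, hr.trans_eq Nat.cast_zero]
    refine (hasPolyGaussBound_of_lt (lt_min hκ hβ) hα (min_le_right κ β) hβγ ?_).mono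
      (min_le_left κ β)
    rcases min_choice κ β with h | h <;> rw [h] <;> linarith
  | succ r ih =>
    push_cast at hr
    refine .of_contiguous hα hβ (ih hα hβ (by linarith) (by linarith))
      (ih (by linarith) (by linarith) (by linarith) ?_)
    rw [max_add_add_right]
    linarith

theorem bfun_eq (m₁ m₂ : ℕ) {l : ℂ} (hl : 0 ≤ l.im) (t : ℝ) :
    bfun m₁ m₂ l t = (Gamma (((m₁ : ℂ) + m₂ + 1) / 2))⁻¹ *
      ((2 : ℂ) ^ (-(rho m₁ m₂ : ℂ) - 1 - I * l) *
        ((2 * Real.cosh t : ℝ) : ℂ) ^ (I * l - (rho m₁ m₂ : ℂ))) *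
      (Gamma ((rho m₁ m₂ - I * l) / 2) * Gamma (((m₁ : ℂ) + 2) / 4 - I * l / 2) *
        regularizedGaussHGFun ((rho m₁ m₂ - I * l) / 2) (((m₁ : ℂ) + 2) / 4 - I * l / 2)
          (1 - I * l) ((Real.cosh t ^ 2 : ℝ) : ℂ)⁻¹) := by
  have hre : 0 < (1 - I * l).re := by simp; linarith
  rw [bfun, Phi, hyp_eq_Gamma_mul_regularizedGaussHGFun _ _ (ne_neg_natCast_of_re_pos hre),
    ← div_div]
  field_simp [Gamma_ne_zero_of_re_pos hre]

theorem rho_nonneg (m₁ m₂ : ℕ) : 0 ≤ rho m₁ m₂ := by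
  rw [rho]
  positivity

theorem norm_two_cpow_mul_cosh_cpow_le_one (m₁ m₂ : ℕ) {l : ℂ} (hl : 0 ≤ l.im) (t : ℝ) :
    ‖(2 : ℂ) ^ (-(rho m₁ m₂ : ℂ) - 1 - I * l) *
      ((2 * Real.cosh t : ℝ) : ℂ) ^ (I * l - (rho m₁ m₂ : ℂ))‖ ≤ 1 := by
  have hρ := rho_nonneg m₁ m₂
  have hcosh : 2 ≤ 2 * Real.cosh t := by linarith [Real.one_le_cosh t]
  have hre₁ : (-(rho m₁ m₂ : ℂ) - 1 - I * l).re = -rho m₁ m₂ - 1 + l.im := by simp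
  have hre₂ : (I * l - (rho m₁ m₂ : ℂ)).re = -l.im - rho m₁ m₂ := by simp
  rw [norm_mul, ← ofReal_ofNat, norm_cpow_eq_rpow_re_of_pos two_pos,
    norm_cpow_eq_rpow_re_of_pos (two_pos.trans_le hcosh), hre₁, hre₂]
  calc (2 : ℝ) ^ (-rho m₁ m₂ - 1 + l.im) * (2 * Real.cosh t) ^ (-l.im - rho m₁ m₂)
      ≤ 2 ^ (-rho m₁ m₂ - 1 + l.im) * 2 ^ (-l.im - rho m₁ m₂) := by
        gcongr ?_ * ?_
        exact Real.rpow_le_rpow_of_nonpos two_pos hcosh (by linarith)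
    _ = 2 ^ (-(2 * rho m₁ m₂ + 1)) := by
        rw [← Real.rpow_add two_pos]
        congr 1
        ring
    _ ≤ 1 := Real.rpow_le_one_of_one_le_of_nonpos one_le_two (by linarith)

theorem one_sub_inv_cosh_sq (t : ℝ) : 1 - (Real.cosh t ^ 2)⁻¹ = Real.tanh t ^ 2 := by
  have := Real.cosh_pos t
  rw [Real.tanh_eq_sinh_div_cosh, div_pow, Real.sinh_sq]
  field_simp

theorem div_cosh_le_tanh {t T : ℝ} (ht : t ∈ Icc 0 T) : t / Real.cosh T ≤ Real.tanh t := by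
  have hT : 0 ≤ T := ht.1.trans ht.2
  rw [Real.tanh_eq_sinh_div_cosh]
  have hsinh : t ≤ Real.sinh t := Real.self_le_sinh_iff.2 ht.1
  have hcosh : Real.cosh t ≤ Real.cosh T := by
    rw [Real.cosh_le_cosh, abs_of_nonneg ht.1, abs_of_nonneg hT]
    exact ht.2
  have := ht.1.trans hsinh
  gcongr

theorem exists_norm_bfun_le_tanh (m₁ m₂ : ℕ) (hm : 1 < m₁ + m₂) :
    ∃ (C : ℝ) (N : ℕ), 0 ≤ C ∧ ∀ l : ℂ, 0 ≤ l.im → ∀ t : ℝ, 0 < t →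
      ‖bfun m₁ m₂ l t‖ ≤ C * (1 + ‖l‖) ^ N * Real.tanh t ^ (-((m₁ : ℝ) + m₂ - 1)) := by
  have hm' : (1 : ℝ) < m₁ + m₂ := mod_cast hm
  obtain ⟨K, N, hK, hbound⟩ := hasPolyGaussBound (κ := ((m₁ : ℝ) + m₂ - 1) / 2)
    (α := rho m₁ m₂ / 2) (β := ((m₁ : ℝ) + 2) / 4) (γ := 1) (by linarith)
    (by rw [rho]; linarith) (by positivity) (by rw [rho]; linarith)
  refine ⟨‖Gamma (((m₁ : ℂ) + m₂ + 1) / 2)‖⁻¹ * K, N, by positivity, fun l hl t ht => ?_⟩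
  have htanh : 0 < Real.tanh t :=
    (div_pos ht (Real.cosh_pos t)).trans_le (div_cosh_le_tanh ⟨ht.le, le_rfl⟩)
  have hz : ‖-(I * l / 2)‖ ≤ ‖l‖ := by
    rw [norm_neg, norm_div, norm_mul, norm_I, Complex.norm_two, one_mul]
    linarith [norm_nonneg l]
  have hx : (Real.cosh t ^ 2)⁻¹ ∈ Ico (0 : ℝ) 1 :=
    ⟨by positivity, by linarith [one_sub_inv_cosh_sq t, pow_pos htanh 2]⟩
  have ha : (rho m₁ m₂ - I * l) / 2 = (rho m₁ m₂ / 2 : ℝ) + -(I * l / 2) := by push_cast; ring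
  have hb : ((m₁ : ℂ) + 2) / 4 - I * l / 2 = (((m₁ : ℝ) + 2) / 4 : ℝ) + -(I * l / 2) := by
    push_cast; ring
  have hc : 1 - I * l = (1 : ℝ) + 2 * -(I * l / 2) := by push_cast; ring
  have hpow : (1 - (Real.cosh t ^ 2)⁻¹) ^ (-(((m₁ : ℝ) + m₂ - 1) / 2)) =
      Real.tanh t ^ (-((m₁ : ℝ) + m₂ - 1)) := by
    rw [one_sub_inv_cosh_sq, ← Real.rpow_natCast, ← Real.rpow_mul htanh.le]
    congr 1
    push_cast
    ring
  have hF := hbound (-(I * l / 2)) (by simp; linarith) _ hx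
  rw [hpow, ← ha, ← hb, ← hc, ofReal_inv] at hF
  rw [bfun_eq m₁ m₂ hl, norm_mul, norm_mul, norm_inv, mul_assoc _ K, mul_assoc _ (K * _)]
  refine mul_le_mul (mul_le_of_le_one_right (by positivity)
    (norm_two_cpow_mul_cosh_cpow_le_one m₁ m₂ hl t)) (hF.trans ?_) (norm_nonneg _) (by positivity)
  gcongr

theorem stmt0_general (m₁ m₂ : ℕ) (hm : 1 < m₁ + m₂) (T : ℝ) :
    ∃ (C : ℝ) (N : ℕ), 0 < C ∧
      ∀ l : ℂ, 0 ≤ l.im → ∀ t ∈ Set.Ioc 0 T,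
        ‖bfun m₁ m₂ l t‖ ≤ C * (1 + ‖l‖) ^ N * t ^ (-(((m₁ : ℝ) + m₂) - 1)) := by
  obtain ⟨C, N, hC, hbound⟩ := exists_norm_bfun_le_tanh m₁ m₂ hm
  have hm' : (1 : ℝ) < m₁ + m₂ := mod_cast hm
  have hT := Real.cosh_pos T
  refine ⟨(C + 1) * Real.cosh T ^ ((m₁ : ℝ) + m₂ - 1), N, by positivity, fun l hl t ht => ?_⟩
  have hpos : 0 < t / Real.cosh T := div_pos ht.1 hT
  have htanh : t / Real.cosh T ≤ Real.tanh t := div_cosh_le_tanh ⟨ht.1.le, ht.2⟩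
  have hrpow : (t / Real.cosh T) ^ (-((m₁ : ℝ) + m₂ - 1)) =
      Real.cosh T ^ ((m₁ : ℝ) + m₂ - 1) * t ^ (-((m₁ : ℝ) + m₂ - 1)) := by
    rw [Real.div_rpow ht.1.le hT.le, Real.rpow_neg hT.le, div_inv_eq_mul, mul_comm]
  calc ‖bfun m₁ m₂ l t‖
      ≤ C * (1 + ‖l‖) ^ N * Real.tanh t ^ (-((m₁ : ℝ) + m₂ - 1)) := hbound l hl t ht.1
    _ ≤ C * (1 + ‖l‖) ^ N * (t / Real.cosh T) ^ (-((m₁ : ℝ) + m₂ - 1)) := by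
        gcongr _ * ?_
        exact Real.rpow_le_rpow_of_nonpos hpos htanh (by linarith)
    _ ≤ (C + 1) * (1 + ‖l‖) ^ N * (t / Real.cosh T) ^ (-((m₁ : ℝ) + m₂ - 1)) := by
        gcongr
        exact (lt_add_one C).le
    _ = _ := by rw [hrpow]; ring

theorem stmt0 (m₁ m₂ : ℕ) (hm₁ : 1 ≤ m₁) (hm : 1 < m₁ + m₂) :
    ∃ (C : ℝ) (N : ℕ), 0 < C ∧
      ∀ l : ℂ, 0 < l.im → ∀ t ∈ Set.Ioc (0 : ℝ) (1 / 2),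
        ‖bfun m₁ m₂ l t‖ ≤ C * (1 + ‖l‖) ^ N * t ^ (-(((m₁ : ℝ) + m₂) - 1)) := by
  obtain ⟨C, N, hC, hbound⟩ := stmt0_general m₁ m₂ hm (1 / 2)
  exact ⟨C, N, hC, fun l hl t ht => hbound l hl.le t ht⟩

end
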